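/- arXiv:math/0310059 — 2 statements merged into one kernel-verified Lean document; each statement's English description precedes it below -/
import Mathlib

section
/- The ratio of the modified factor g(a)/e to the Bregman factor (a!)^{1/a} tends to 1 as a → ∞; that is, lim_{a→∞} (g(a)/e) / (a!)^{1/a} = 1. -/
/-!
The increments of `bregmanG` are `1 + 1/(2 g) + 0.6/g²`. They are at least `1`, so `g n ≥ n → ∞`;
hence the increments tend to `1`, and Cesàro averaging gives `g n / n → 1`.
On the other side, `n! = stirlingSeq n * √(2n) * (n/e)ⁿ` with `stirlingSeq n → √π ≠ 0`, and
`√(2n)^(1/n) = (2n)^(1/(2n)) → 1`, so `(n!)^(1/n)` equals `n/e` times a factor tending to `1`.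
-/


/-- The Bregman-like sequence: `g 1 = e`, `g (a+1) = g a + 1 + 1/(2 g a) + 0.6/(g a)^2`. -/
noncomputable def bregmanG : ℕ → ℝ
  | 0 => Real.exp 1
  | 1 => Real.exp 1
  | (a + 2) => bregmanG (a + 1) + 1 + 1 / (2 * bregmanG (a + 1))
      + 0.6 / (bregmanG (a + 1)) ^ 2

open Filter Topology

lemma bregmanG_succ {n : ℕ} (hn : n ≠ 0) :
    bregmanG (n + 1) = bregmanG n + 1 + 1 / (2 * bregmanG n) + 0.6 / (bregmanG n) ^ 2 := by
  obtain ⟨k, rfl⟩ := Nat.exists_eq_succ_of_ne_zero hn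
  rfl

lemma natCast_le_bregmanG (n : ℕ) : (n : ℝ) ≤ bregmanG n := by
  induction n with
  | zero => simpa [bregmanG] using (Real.exp_pos 1).le
  | succ n ih =>
    rcases eq_or_ne n 0 with rfl | hn
    · simp [bregmanG]
    · have hg : 0 ≤ bregmanG n := n.cast_nonneg.trans ih
      have h1 : 0 ≤ 1 / (2 * bregmanG n) := by positivity
      have h2 : 0 ≤ 0.6 / bregmanG n ^ 2 := by positivity
      rw [bregmanG_succ hn]
      push_cast
      linarith

lemma tendsto_bregmanG_atTop : Tendsto bregmanG atTop atTop :=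
  tendsto_atTop_mono natCast_le_bregmanG tendsto_natCast_atTop_atTop

lemma tendsto_bregmanG_sub : Tendsto (fun n => bregmanG (n + 1) - bregmanG n) atTop (𝓝 1) := by
  have h := tendsto_inv_atTop_zero.comp tendsto_bregmanG_atTop
  have h' : Tendsto (fun n => 1 + 1 / 2 * (bregmanG n)⁻¹ + 0.6 * (bregmanG n)⁻¹ ^ 2)
      atTop (𝓝 (1 + 1 / 2 * 0 + 0.6 * 0 ^ 2)) :=
    ((h.const_mul _).const_add _).add ((h.pow 2).const_mul _)
  norm_num only at h'
  refine h'.congr' ?_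
  filter_upwards [eventually_ne_atTop 0] with n hn
  rw [bregmanG_succ hn]
  ring

lemma tendsto_bregmanG_div : Tendsto (fun n : ℕ => bregmanG n / n) atTop (𝓝 1) := by
  have h := tendsto_bregmanG_sub.cesaro
  have h0 := (tendsto_inv_atTop_nhds_zero_nat (𝕜 := ℝ)).const_mul (bregmanG 0)
  have h1 := h.add h0
  rw [mul_zero, add_zero] at h1
  refine h1.congr fun n => ?_
  rw [Finset.sum_range_sub]
  ring

/-- The `n`-th root of the subexponential part `stirlingSeq n * √(2n)` of `n!` tends to `1`. -/
lemma tendsto_stirling_correction :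
    Tendsto (fun n : ℕ => Stirling.stirlingSeq n ^ ((1 : ℝ) / n) *
      (2 * n : ℝ) ^ (1 / (2 * n : ℝ))) atTop (𝓝 1) := by
  have hs := Stirling.tendsto_stirlingSeq_sqrt_pi.rpow
    (tendsto_const_div_atTop_nhds_zero_nat (1 : ℝ))
    (Or.inl (Real.sqrt_pos.2 Real.pi_pos).ne')
  have h2 : Tendsto (fun n : ℕ => (2 * n : ℝ)) atTop atTop :=
    tendsto_natCast_atTop_atTop.const_mul_atTop two_pos
  have h := hs.mul (tendsto_rpow_div.comp h2)
  rw [Real.rpow_zero, one_mul] at h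
  exact h

lemma factorial_rpow_eq {n : ℕ} (hn : n ≠ 0) :
    (n.factorial : ℝ) ^ ((1 : ℝ) / n) =
      (Stirling.stirlingSeq n ^ ((1 : ℝ) / n) * (2 * n : ℝ) ^ (1 / (2 * n : ℝ))) *
        (n / Real.exp 1) := by
  have hn' : (0 : ℝ) < n := by positivity
  have hs : 0 ≤ Stirling.stirlingSeq n := by unfold Stirling.stirlingSeq; positivity
  have hf : (n.factorial : ℝ) =
      Stirling.stirlingSeq n * √(2 * n) * (n / Real.exp 1) ^ n := by
    unfold Stirling.stirlingSeq
    field_simp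
  rw [hf, Real.mul_rpow (by positivity) (by positivity), Real.mul_rpow hs (by positivity),
    Real.sqrt_eq_rpow, ← Real.rpow_mul (by positivity), one_div (n : ℝ),
    Real.pow_rpow_inv_natCast (by positivity) hn]
  congr 3
  field_simp

/-- The ratio of `g a / e` to the Bregman factor `(a!)^(1/a)` tends to 1 as `a → ∞`. -/
theorem bregmanG_div_bregman_factor_tendsto_one :
    Filter.Tendsto
      (fun a : ℕ => (bregmanG a / Real.exp 1) / ((a.factorial : ℝ) ^ ((1 : ℝ) / a)))
      Filter.atTop (nhds 1) := by
  have h := tendsto_bregmanG_div.div tendsto_stirling_correction one_ne_zero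
  rw [div_one] at h
  refine h.congr' ?_
  filter_upwards [eventually_ne_atTop 0] with n hn
  have he := (Real.exp_pos 1).ne'
  simp only [Pi.div_apply]
  rw [factorial_rpow_eq hn, mul_comm _ ((n : ℝ) / Real.exp 1),
    ← div_div (bregmanG n / Real.exp 1),
    div_div_div_cancel_right₀ he]
end

section
/- Let A be an n×n matrix with entries in {0,1} all of whose row sums are at least 2, and let j ∈ {1,…,n} be a column index. Then Σ_{i : A(i,j)=1} M̃(f(A,i,j)) ≤ M̃(A), where M̃ and the reduced matrix f(A,i,j) are defined below. -/
/-- `M̃(B) = ∏ i, g(r i)/e` where `r i` is the `i`-th row sum of `B`. -/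
noncomputable def Mtilde {n : ℕ} (B : Matrix (Fin n) (Fin n) ℕ) : ℝ :=
  ∏ i, bregmanG (∑ j, B i j) / Real.exp 1

/-- The reduced matrix `f(A,i,j)`: zero out row `i` and column `j` of `A` except the
entry `(i,j)`, which is set to 1. -/
def reduce {n : ℕ} (A : Matrix (Fin n) (Fin n) ℕ) (i j : Fin n) :
    Matrix (Fin n) (Fin n) ℕ :=
  fun k l => if k = i ∧ l = j then 1 else if k = i ∨ l = j then 0 else A k l

lemma exp_one_le_bregmanG : ∀ a : ℕ, Real.exp 1 ≤ bregmanG a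
  | 0 => le_rfl
  | 1 => le_rfl
  | (a + 2) => by
    have h := exp_one_le_bregmanG (a + 1)
    have hpos : 0 < bregmanG (a + 1) := (Real.exp_pos 1).trans_le h
    have h1 : 0 < 1 / (2 * bregmanG (a + 1)) := by positivity
    have h2 : 0 < 0.6 / (bregmanG (a + 1)) ^ 2 := by positivity
    rw [bregmanG]
    linarith

lemma bregmanG_pos (a : ℕ) : 0 < bregmanG a :=
  (Real.exp_pos 1).trans_le (exp_one_le_bregmanG a)

lemma exp_le_cubic {y : ℝ} (h0 : 0 ≤ y) (h1 : y ≤ 1) :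
    Real.exp y ≤ 1 + y + y ^ 2 / 2 + 0.6 * y ^ 3 := by
  have h := Real.exp_bound' h0 h1 (n := 3) (by norm_num)
  norm_num [Finset.sum_range_succ, Nat.factorial] at h
  have : 0 ≤ y ^ 3 := by positivity
  linarith

/-- One step of the recursion dominates `x ↦ x * exp (1 / x)`. The index `a = 0` is excluded, as
there `bregmanG 0 = bregmanG 1`. -/
lemma bregmanG_mul_exp_le {a : ℕ} (ha : 1 ≤ a) :
    bregmanG a * Real.exp (bregmanG a)⁻¹ ≤ bregmanG (a + 1) := by
  obtain ⟨c, rfl⟩ : ∃ c, a = c + 1 := ⟨a - 1, by omega⟩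
  have hpos := bregmanG_pos (c + 1)
  have hone : 1 ≤ bregmanG (c + 1) :=
    (Real.one_le_exp zero_le_one).trans (exp_one_le_bregmanG _)
  have h := exp_le_cubic (inv_nonneg.2 hpos.le) (inv_le_one_of_one_le₀ hone)
  refine (mul_le_mul_of_nonneg_left h hpos.le).trans_eq ?_
  rw [bregmanG]
  field_simp

lemma sum_reduce_self {n : ℕ} (A : Matrix (Fin n) (Fin n) ℕ) (i j : Fin n) :
    ∑ l, reduce A i j i l = 1 := by
  simp [reduce]

lemma sum_reduce_of_ne {n : ℕ} (A : Matrix (Fin n) (Fin n) ℕ) {i k : Fin n} (j : Fin n)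
    (hk : k ≠ i) : ∑ l, reduce A i j k l = ∑ l, A k l - A k j := by
  have h0 : reduce A i j k j = 0 := by simp [reduce, hk]
  rw [← Finset.add_sum_erase Finset.univ (fun l => A k l) (Finset.mem_univ j),
    Nat.add_sub_cancel_left,
    ← Finset.add_sum_erase Finset.univ (fun l => reduce A i j k l) (Finset.mem_univ j), h0,
    zero_add]
  refine Finset.sum_congr rfl fun l hl => ?_
  simp [reduce, hk, Finset.ne_of_mem_erase hl]

lemma Mtilde_reduce {n : ℕ} (A : Matrix (Fin n) (Fin n) ℕ) (i j : Fin n) :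
    Mtilde (reduce A i j) = (∏ k, bregmanG (∑ l, A k l - A k j) / Real.exp 1) *
      (bregmanG (∑ l, A i l - A i j) / Real.exp 1)⁻¹ := by
  have hb : bregmanG (∑ l, A i l - A i j) / Real.exp 1 ≠ 0 :=
    (div_pos (bregmanG_pos _) (Real.exp_pos 1)).ne'
  rw [Mtilde, ← Finset.mul_prod_erase _ _ (Finset.mem_univ i), sum_reduce_self,
    ← Finset.mul_prod_erase Finset.univ (fun k => bregmanG (∑ l, A k l - A k j) / Real.exp 1)
      (Finset.mem_univ i), mul_right_comm, mul_inv_cancel₀ hb, bregmanG,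
    div_self (Real.exp_pos 1).ne']
  congr 1
  refine Finset.prod_congr rfl fun k hk => ?_
  rw [sum_reduce_of_ne A j (Finset.ne_of_mem_erase hk)]

/-- For a 0-1 matrix `A` with all row sums at least 2 and any column `j`,
`∑_{i : A(i,j)=1} M̃(f(A,i,j)) ≤ M̃(A)`. -/
theorem sum_Mtilde_reduce_le (n : ℕ) (A : Matrix (Fin n) (Fin n) ℕ)
    (h01 : ∀ i j, A i j = 0 ∨ A i j = 1)
    (hrow : ∀ i, 2 ≤ ∑ j, A i j) (j : Fin n) :
    ∑ i ∈ Finset.univ.filter (fun i => A i j = 1), Mtilde (reduce A i j)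
      ≤ Mtilde A := by
  set G : Fin n → ℝ := fun k => bregmanG (∑ l, A k l - A k j) with hG
  have hGpos : ∀ k, 0 < G k := fun k => bregmanG_pos _
  set t : ℝ := ∑ i ∈ Finset.univ.filter (fun i => A i j = 1), (G i)⁻¹ with ht
  have hb : ∀ k, 0 < G k / Real.exp 1 := fun k => div_pos (hGpos k) (Real.exp_pos 1)
  have hP : 0 ≤ ∏ k, G k / Real.exp 1 := Finset.prod_nonneg fun k _ => (hb k).le
  have hexp : Real.exp 1 * t ≤ Real.exp t := by
    have h := mul_le_mul_of_nonneg_left (Real.add_one_le_exp (t - 1)) (Real.exp_pos 1).le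
    rwa [← Real.exp_add, sub_add_cancel, add_sub_cancel] at h
  calc ∑ i ∈ Finset.univ.filter (fun i => A i j = 1), Mtilde (reduce A i j)
      = (∏ k, G k / Real.exp 1) * (Real.exp 1 * t) := by
        rw [ht, Finset.mul_sum, Finset.mul_sum]
        refine Finset.sum_congr rfl fun i _ => ?_
        rw [Mtilde_reduce, inv_div, div_eq_mul_inv (Real.exp 1)]
    _ ≤ (∏ k, G k / Real.exp 1) * Real.exp t := mul_le_mul_of_nonneg_left hexp hP
    _ = ∏ k, (G k / Real.exp 1 * Real.exp (if A k j = 1 then (G k)⁻¹ else 0)) := by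
        rw [Finset.prod_mul_distrib, ← Real.exp_sum, ht, Finset.sum_filter]
    _ ≤ Mtilde A := by
        refine Finset.prod_le_prod
          (fun k _ => mul_nonneg (hb k).le (Real.exp_pos _).le) fun k _ => ?_
        rw [div_mul_eq_mul_div]
        refine div_le_div_of_nonneg_right ?_ (Real.exp_pos 1).le
        have hk := hrow k
        rcases h01 k j with h | h
        · simp [hG, h]
        · have h' := bregmanG_mul_exp_le (a := ∑ l, A k l - 1) (by omega)
          rw [Nat.sub_add_cancel (by omega)] at h'
          simpa [hG, h] using h'
end
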